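/- Poincaré–Koszul presentation of the reduced Adini 1-form space: Let curl f := (−∂_y f, ∂_x f), let A := {f ∈ ℝ[x,y] : deg f ≤ 3} + span{x³y, xy³}, and let Ã := {(p,q) ∈ ℝ[x,y]² : deg p ≤ 1 and deg q ≤ 1} + span{curl(x³), curl(y³), curl(x²y), curl(xy²), curl(x³y), curl(xy³)}. Then Ã = {curl φ : φ ∈ A} + span{(x, y)}, where (x,y) is the Koszul field κ(1) obtained by multiplying the constant 1 by the position vector. -/

import Mathlib

open MvPolynomial

noncomputable section

/-- Polynomials in two variables `x, y` over `ℝ`. -/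
abbrev M2 : Type := MvPolynomial (Fin 2) ℝ

def x : M2 := X 0
def y : M2 := X 1

/-- The 2D curl of a scalar polynomial: `curl f = (−∂_y f, ∂_x f)`. -/
def curl2 (f : M2) : Fin 2 → M2 := ![-(pderiv 1 f), pderiv 0 f]

/-- The 2D Adini 0-form shape space `A := P₃ + span{x³y, xy³}`. -/
def A0 : Submodule ℝ M2 :=
  restrictTotalDegree (Fin 2) ℝ 3 ⊔ Submodule.span ℝ {x ^ 3 * y, x * y ^ 3}

/-- The reduced Adini 1-form shape space
`Ã := [P₁]² + span{curl(x³), curl(y³), curl(x²y), curl(xy²), curl(x³y), curl(xy³)}`. -/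
def Atilde : Submodule ℝ (Fin 2 → M2) :=
  (Submodule.pi Set.univ fun _ => restrictTotalDegree (Fin 2) ℝ 1) ⊔
    Submodule.span ℝ
      {curl2 (x ^ 3), curl2 (y ^ 3), curl2 (x ^ 2 * y), curl2 (x * y ^ 2),
        curl2 (x ^ 3 * y), curl2 (x * y ^ 3)}

/-!
For a field `u = (p, q)`, the Koszul homotopy formula reads
`curl (x q - y p) + (div u) • (x, y) = u + (x ∂ₓ + y ∂_y) u`, and by Euler's identity the right-hand
side is `(k + 1) u` when `u` is homogeneous of degree `k`. If `1, …, n + 2` are invertible, then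
`[P₍ₙ₊₁₎]² = curl P₍ₙ₊₂₎ + κ P₍ₙ₎`. For `n = 0` this is `[P₁]² = curl P₂ + span {(x, y)}`, and
the remaining generators of `Ã` are the curls of the monomials that span `A` modulo `P₂`.
-/

theorem mem_map_sup_span_singleton {R M N : Type*} [Semiring R] [AddCommMonoid M]
    [AddCommMonoid N] [Module R M] [Module R N] {f : M →ₗ[R] N} {p : Submodule R M} {v w : N} :
    w ∈ p.map f ⊔ Submodule.span R {v} ↔ ∃ m ∈ p, ∃ c : R, w = f m + c • v := by
  simp [Submodule.mem_sup, Submodule.mem_span_singleton, eq_comm]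

section TotalDegree

variable {σ R : Type*} [CommSemiring R]

theorem totalDegree_pderiv_le (i : σ) (p : MvPolynomial σ R) :
    (pderiv i p).totalDegree ≤ p.totalDegree - 1 := by
  refine Finset.sup_le fun d hd => ?_
  rw [mem_support_iff, coeff_pderiv] at hd
  have hdeg : (d + Finsupp.single i 1).degree ≤ p.totalDegree :=
    le_totalDegree (mem_support_iff.2 (left_ne_zero_of_mul hd))
  rw [map_add, Finsupp.degree_single] at hdeg
  exact Nat.le_sub_of_add_le hdeg

theorem pderiv_mem_restrictTotalDegree {n : ℕ} {p : MvPolynomial σ R}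
    (hp : p ∈ restrictTotalDegree σ R (n + 1)) (i : σ) :
    pderiv i p ∈ restrictTotalDegree σ R n := by
  rw [mem_restrictTotalDegree] at hp ⊢
  have := totalDegree_pderiv_le i p
  omega

theorem X_mul_mem_restrictTotalDegree {n : ℕ} {p : MvPolynomial σ R}
    (hp : p ∈ restrictTotalDegree σ R n) (i : σ) :
    X i * p ∈ restrictTotalDegree σ R (n + 1) := by
  rw [mem_restrictTotalDegree] at hp ⊢
  have hmul := totalDegree_mul (X i) p
  have hX : (X i : MvPolynomial σ R).totalDegree ≤ 1 := (isHomogeneous_X R i).totalDegree_le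
  omega

theorem restrictTotalDegree_zero : restrictTotalDegree σ R 0 = Submodule.span R {1} := by
  ext p
  rw [mem_restrictTotalDegree, nonpos_iff_eq_zero, totalDegree_zero_iff_isHomogeneous,
    ← mem_homogeneousSubmodule, homogeneousSubmodule_zero, Submodule.one_eq_span]

theorem homogeneousSubmodule_eq_restrictSupport (n : ℕ) :
    homogeneousSubmodule σ R n = restrictSupport R {d | d.degree = n} :=
  homogeneousSubmodule_eq_finsupp_supported σ R n

theorem restrictTotalDegree_succ (n : ℕ) :
    restrictTotalDegree σ R (n + 1) =
      restrictTotalDegree σ R n ⊔ homogeneousSubmodule σ R (n + 1) := by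
  have hsupport : {d : σ →₀ ℕ | d.degree ≤ n + 1} = {d | d.degree ≤ n} ∪ {d | d.degree = n + 1} :=
    Set.ext fun _ => Nat.le_succ_iff
  change restrictSupport R {d | d.degree ≤ n + 1} = restrictSupport R {d | d.degree ≤ n} ⊔ _
  simp only [hsupport, homogeneousSubmodule_eq_restrictSupport, restrictSupport_eq_span,
    Set.image_union, Submodule.span_union]

theorem homogeneousSubmodule_fin_two (n : ℕ) :
    homogeneousSubmodule (Fin 2) R n =
      Submodule.span R ((fun d : ℕ × ℕ => X 0 ^ d.1 * X 1 ^ d.2) '' {d | d.1 + d.2 = n}) := by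
  have hmonomial (d : Fin 2 →₀ ℕ) : monomial d (1 : R) = X 0 ^ d 0 * X 1 ^ d 1 := by
    rw [monomial_eq, Finsupp.prod_fintype _ _ (by simp), Fin.prod_univ_two, C_1, one_mul]
  have hdegree (d : Fin 2 →₀ ℕ) : d.degree = d 0 + d 1 := by
    rw [Finsupp.degree_eq_sum, Fin.sum_univ_two]
  rw [homogeneousSubmodule_eq_restrictSupport, restrictSupport_eq_span]
  congr 1
  ext p
  constructor
  · rintro ⟨d, rfl, rfl⟩
    exact ⟨(d 0, d 1), (hdegree d).symm, (hmonomial d).symm⟩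
  · rintro ⟨⟨i, j⟩, rfl, rfl⟩
    exact ⟨Finsupp.single 0 i + Finsupp.single 1 j, by simp, by simp [hmonomial]⟩

theorem sum_range_homogeneousComponent {n : ℕ} {p : MvPolynomial σ R} (hp : p.totalDegree ≤ n) :
    ∑ k ∈ Finset.range (n + 1), homogeneousComponent k p = p := by
  conv_rhs => rw [← sum_homogeneousComponent p]
  refine (Finset.sum_subset (Finset.range_mono (by omega)) fun k _ hk => ?_).symm
  exact homogeneousComponent_eq_zero k p (by simpa using hk)

end TotalDegree

section Koszul

variable {R : Type*} [CommRing R]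

/-- The planar curl as a linear map over any coefficient ring; over `ℝ` its underlying function is
`curl2` by definition. -/
def curl : MvPolynomial (Fin 2) R →ₗ[R] (Fin 2 → MvPolynomial (Fin 2) R) where
  toFun f := ![-(pderiv 1 f), pderiv 0 f]
  map_add' f g := by simp [add_comm]
  map_smul' r f := by simp

/-- The divergence `∂ₓ p + ∂_y q` of a planar field `(p, q)`. -/
def divergence (u : Fin 2 → MvPolynomial (Fin 2) R) : MvPolynomial (Fin 2) R :=
  pderiv 0 (u 0) + pderiv 1 (u 1)

/-- The Koszul operator `κ` on scalars, `v ↦ v • (x, y)`. -/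
def koszul : MvPolynomial (Fin 2) R →ₗ[R] (Fin 2 → MvPolynomial (Fin 2) R) :=
  (LinearMap.toSpanSingleton (MvPolynomial (Fin 2) R) _ ![X 0, X 1]).restrictScalars R

/-- The Koszul operator `κ` on planar fields: `(p, q)` stands for the 1-form `q dx - p dy`, so that
`curl` is the exterior derivative, and is contracted with the position vector `(x, y)`. -/
def koszulPotential (u : Fin 2 → MvPolynomial (Fin 2) R) : MvPolynomial (Fin 2) R :=
  X 0 * u 1 - X 1 * u 0

theorem curl_koszulPotential_add_koszul_divergence (u : Fin 2 → MvPolynomial (Fin 2) R) :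
    curl (koszulPotential u) + koszul (divergence u) =
      u + fun i => X 0 * pderiv 0 (u i) + X 1 * pderiv 1 (u i) := by
  ext1 i
  fin_cases i
  · change -(pderiv 1 (X 0 * u 1 - X 1 * u 0)) + (pderiv 0 (u 0) + pderiv 1 (u 1)) * X 0 =
      u 0 + (X 0 * pderiv 0 (u 0) + X 1 * pderiv 1 (u 0))
    simp only [map_sub, pderiv_mul, pderiv_X_self, pderiv_X_of_ne zero_ne_one]
    ring
  · change pderiv 0 (X 0 * u 1 - X 1 * u 0) + (pderiv 0 (u 0) + pderiv 1 (u 1)) * X 1 =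
      u 1 + (X 0 * pderiv 0 (u 1) + X 1 * pderiv 1 (u 1))
    simp only [map_sub, pderiv_mul, pderiv_X_self, pderiv_X_of_ne one_ne_zero]
    ring

theorem curl_koszulPotential_add_koszul_divergence_of_isHomogeneous {k : ℕ}
    {u : Fin 2 → MvPolynomial (Fin 2) R} (hu : ∀ i, (u i).IsHomogeneous k) :
    curl (koszulPotential u) + koszul (divergence u) = (k + 1) • u := by
  have euler : (fun i => X 0 * pderiv 0 (u i) + X 1 * pderiv 1 (u i)) = k • u := by
    ext1 i
    rw [Pi.smul_apply, ← (hu i).sum_X_mul_pderiv, Fin.sum_univ_two]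
  rw [curl_koszulPotential_add_koszul_divergence, euler, succ_nsmul']

theorem curl_apply_mem_restrictTotalDegree {n : ℕ} {f : MvPolynomial (Fin 2) R}
    (hf : f ∈ restrictTotalDegree (Fin 2) R (n + 1)) (i : Fin 2) :
    curl f i ∈ restrictTotalDegree (Fin 2) R n := by
  fin_cases i
  · exact neg_mem (pderiv_mem_restrictTotalDegree hf 1)
  · exact pderiv_mem_restrictTotalDegree hf 0

theorem koszul_apply_mem_restrictTotalDegree {n : ℕ} {f : MvPolynomial (Fin 2) R}
    (hf : f ∈ restrictTotalDegree (Fin 2) R n) (i : Fin 2) :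
    koszul f i ∈ restrictTotalDegree (Fin 2) R (n + 1) := by
  have := X_mul_mem_restrictTotalDegree hf i
  fin_cases i <;> simpa [koszul, mul_comm] using this

theorem mem_map_curl_sup_map_koszul_of_isHomogeneous {k n : ℕ} (hkn : k ≤ n + 1)
    (hk : IsUnit ((k + 1 : ℕ) : R)) {u : Fin 2 → MvPolynomial (Fin 2) R}
    (hu : ∀ i, (u i).IsHomogeneous k) :
    u ∈ (restrictTotalDegree (Fin 2) R (n + 2)).map curl ⊔
      (restrictTotalDegree (Fin 2) R n).map koszul := by
  have hdeg (i : Fin 2) : u i ∈ restrictTotalDegree (Fin 2) R (n + 1) :=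
    (mem_restrictTotalDegree _ _ _).2 ((hu i).totalDegree_le.trans hkn)
  have hpotential : koszulPotential u ∈ restrictTotalDegree (Fin 2) R (n + 2) :=
    sub_mem (X_mul_mem_restrictTotalDegree (hdeg 1) 0) (X_mul_mem_restrictTotalDegree (hdeg 0) 1)
  have hdivergence : divergence u ∈ restrictTotalDegree (Fin 2) R n :=
    add_mem (pderiv_mem_restrictTotalDegree (hdeg 0) 0) (pderiv_mem_restrictTotalDegree (hdeg 1) 1)
  rw [← Submodule.smul_mem_iff_of_isUnit _ hk, Nat.cast_smul_eq_nsmul,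
    ← curl_koszulPotential_add_koszul_divergence_of_isHomogeneous hu]
  exact Submodule.add_mem_sup (Submodule.mem_map_of_mem hpotential)
    (Submodule.mem_map_of_mem hdivergence)

theorem pi_restrictTotalDegree_eq_map_curl_sup_map_koszul {n : ℕ}
    (hn : IsUnit ((n + 2).factorial : R)) :
    (Submodule.pi Set.univ fun _ : Fin 2 => restrictTotalDegree (Fin 2) R (n + 1)) =
      (restrictTotalDegree (Fin 2) R (n + 2)).map curl ⊔
        (restrictTotalDegree (Fin 2) R n).map koszul := by
  refine le_antisymm (fun u hu => ?_) (sup_le ?_ ?_)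
  · have hsum : ∑ k ∈ Finset.range (n + 2), (fun i => homogeneousComponent k (u i)) = u := by
      ext1 i
      rw [Finset.sum_apply]
      exact sum_range_homogeneousComponent ((mem_restrictTotalDegree _ _ _).1 (hu i trivial))
    rw [← hsum]
    refine Submodule.sum_mem _ fun k hk => ?_
    have hkn : k < n + 2 := Finset.mem_range.1 hk
    have hunit : IsUnit ((k + 1 : ℕ) : R) :=
      isUnit_of_dvd_unit (Nat.cast_dvd_cast (Nat.dvd_factorial k.succ_pos hkn)) hn
    exact mem_map_curl_sup_map_koszul_of_isHomogeneous (Nat.le_of_lt_succ hkn) hunit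
      fun i => homogeneousComponent_isHomogeneous k (u i)
  · rintro _ ⟨f, hf, rfl⟩ i -
    exact curl_apply_mem_restrictTotalDegree hf i
  · rintro _ ⟨f, hf, rfl⟩ i -
    exact koszul_apply_mem_restrictTotalDegree hf i

theorem map_koszul_restrictTotalDegree_zero :
    (restrictTotalDegree (Fin 2) R 0).map koszul = Submodule.span R {![X 0, X 1]} := by
  simp [restrictTotalDegree_zero, Submodule.map_span, koszul]

end Koszul

theorem restrictTotalDegree_three_sup_span {R : Type*} [CommSemiring R] :
    restrictTotalDegree (Fin 2) R 3 ⊔ Submodule.span R {X 0 ^ 3 * X 1, X 0 * X 1 ^ 3} =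
      restrictTotalDegree (Fin 2) R 2 ⊔
        Submodule.span R {X 0 ^ 3, X 1 ^ 3, X 0 ^ 2 * X 1, X 0 * X 1 ^ 2,
          X 0 ^ 3 * X 1, X 0 * X 1 ^ 3} := by
  have hexponents :
      {d : ℕ × ℕ | d.1 + d.2 = 3} = {(3, 0), (0, 3), (2, 1), (1, 2)} := by
    ext ⟨i, j⟩
    simp only [Set.mem_ofPred_eq, Set.mem_insert_iff, Set.mem_singleton_iff, Prod.mk.injEq]
    omega
  rw [restrictTotalDegree_succ, homogeneousSubmodule_fin_two, hexponents, sup_assoc,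
    ← Submodule.span_union]
  simp only [Set.image_insert_eq, Set.image_singleton, Set.insert_union, Set.singleton_union,
    pow_zero, pow_one, mul_one, one_mul]

theorem reduced_adini_koszul_presentation_general {R : Type*} [CommRing R]
    (h2 : IsUnit (2 : R)) :
    ∀ u : Fin 2 → MvPolynomial (Fin 2) R,
      u ∈ (Submodule.pi Set.univ fun _ => restrictTotalDegree (Fin 2) R 1) ⊔
          Submodule.span R
            {curl (X 0 ^ 3), curl (X 1 ^ 3), curl (X 0 ^ 2 * X 1), curl (X 0 * X 1 ^ 2),
              curl (X 0 ^ 3 * X 1), curl (X 0 * X 1 ^ 3)} ↔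
        ∃ φ ∈ restrictTotalDegree (Fin 2) R 3 ⊔
            Submodule.span R {X 0 ^ 3 * X 1, X 0 * X 1 ^ 3},
          ∃ c : R, u = curl φ + c • ![X 0, X 1] := by
  intro u
  have hlinear : (Submodule.pi Set.univ fun _ : Fin 2 => restrictTotalDegree (Fin 2) R 1) =
      (restrictTotalDegree (Fin 2) R 2).map curl ⊔ Submodule.span R {![X 0, X 1]} := by
    rw [pi_restrictTotalDegree_eq_map_curl_sup_map_koszul (by simpa using h2),
      map_koszul_restrictTotalDegree_zero]
  rw [hlinear, restrictTotalDegree_three_sup_span, ← mem_map_sup_span_singleton, Submodule.map_sup,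
    sup_right_comm]
  simp only [Submodule.map_span, Set.image_insert_eq, Set.image_singleton]

/-- Poincaré–Koszul presentation of the reduced Adini 1-form space:
`Ã = curl A + span{(x, y)}`. -/
theorem reduced_adini_koszul_presentation :
    ∀ u : Fin 2 → M2,
      u ∈ Atilde ↔ ∃ φ ∈ A0, ∃ c : ℝ, u = curl2 φ + c • ![x, y] :=
  reduced_adini_koszul_presentation_general (.mk0 2 two_ne_zero)

end
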